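/- Let g, h : ℝⁿ → M_N(ℝ) be smooth with g(x) and h(x) invertible for every x, let k be a positive integer, and let x₀ ∈ ℝⁿ. Suppose g(x₀) = h(x₀) and, for every 1 ≤ j ≤ k and every tuple (μ_1,…,μ_j) ∈ {1,…,n}^j, the trivialized components satisfy ξ^{(j)}_{g;μ_1…μ_j}(x₀) = ξ^{(j)}_{h;μ_1…μ_j}(x₀). Then for every 1 ≤ r ≤ k and every tuple (μ_1,…,μ_r) ∈ {1,…,n}^r, (∂_{μ_1}⋯∂_{μ_r} g)(x₀) = (∂_{μ_1}⋯∂_{μ_r} h)(x₀); that is, g and h have the same k-jet at x₀. (This is the coordinate form, for the flat connection on ℝⁿ, of the injectivity of the trivialization J^k(X,G) ↪ G × ⊕_{j=1}^k (⊗^j T*X ⊗ 𝔤).) -/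

import Mathlib

/-!
The relation `∂_ν g = ξ_ν · g`, with `ξ_ν = (∂_ν g) g⁻¹`, recovers each derivative of `g` of
order `r + 1` from the derivatives of `ξ_ν` and of `g` of order at most `r`. Moreover
`ξ_{μ_1 … μ_j ν} = ∂_{μ_1} ⋯ ∂_{μ_j} ξ_ν` (`xiJ_append_singleton`), so the hypothesis on the
trivialized components says that `ξ_ν` for `g` and `ξ_ν` for `h` have equal `(k - 1)`-jets at `x₀`.
Since the `m`-jet of a product of smooth maps depends only on the `m`-jets of its factors
(`JetEq.mul`, a consequence of the Leibniz rule), induction on `r` shows that `g` and `h` have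
equal `r`-jets for every `r ≤ k`. Smoothness of `ξ_ν`, needed for the Leibniz rule, follows from the
adjugate formula for the inverse.
-/

/-- The partial derivative in the `μ`-th coordinate direction of a matrix-valued map on
`ℝⁿ`, taken entrywise. -/
noncomputable def pd {n N : ℕ} (μ : Fin n) (f : (Fin n → ℝ) → Matrix (Fin N) (Fin N) ℝ) :
    (Fin n → ℝ) → Matrix (Fin N) (Fin N) ℝ :=
  fun x => Matrix.of fun a b => fderiv ℝ (fun y => f y a b) x (Pi.single μ 1)

/-- A matrix-valued map on `ℝⁿ` is smooth iff each entry is `C^∞`. -/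
def MSmooth {n N : ℕ} (f : (Fin n → ℝ) → Matrix (Fin N) (Fin N) ℝ) : Prop :=
  ∀ a b, ContDiff ℝ (⊤ : ℕ∞) fun y => f y a b

/-- Iterated partial derivative `∂_{μ_1}⋯∂_{μ_j} f` for a tuple `[μ_1,…,μ_j]`
(`∂_{μ_j}` acts first, `∂_{μ_1}` last). -/
noncomputable def iterPD {n N : ℕ} :
    List (Fin n) → ((Fin n → ℝ) → Matrix (Fin N) (Fin N) ℝ) →
      ((Fin n → ℝ) → Matrix (Fin N) (Fin N) ℝ)
  | [], f => f
  | μ :: rest, f => pd μ (iterPD rest f)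

/-- `ξ_{μ_1…μ_j}(x) = (∂_{μ_1}⋯∂_{μ_j} g)(x) · g(x)⁻¹`. -/
noncomputable def xiTup {n N : ℕ} (g : (Fin n → ℝ) → Matrix (Fin N) (Fin N) ℝ)
    (μs : List (Fin n)) : (Fin n → ℝ) → Matrix (Fin N) (Fin N) ℝ :=
  fun x => iterPD μs g x * (g x)⁻¹

/-- The trivialized jet components, prepend convention: `ξ^{(1)}_μ = (∂_μ g)·g⁻¹` and
`ξ^{(j)}_{μ_1…μ_j} = ∂_{μ_1}(ξ^{(j−1)}_{μ_2…μ_j})` (the new differentiation index is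
prepended, i.e. the head of the list is the outermost derivative). -/
noncomputable def xiJ {n N : ℕ} (g : (Fin n → ℝ) → Matrix (Fin N) (Fin N) ℝ) :
    List (Fin n) → (Fin n → ℝ) → Matrix (Fin N) (Fin N) ℝ
  | [] => fun _ => 1
  | [μ] => fun x => pd μ g x * (g x)⁻¹
  | μ :: rest => pd μ (xiJ g rest)

/-- The ordered tuple `(μ_a)_{a ∈ κ}` with `κ` sorted increasingly. -/
def tupleOf {n : ℕ} (μ : ℕ → Fin n) (κ : Finset ℕ) : List (Fin n) :=
  (κ.sort (· ≤ ·)).map μ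

/-- `ξ_{λ(μ_1…μ_j)} = ξ_{λ_1(μ_1…μ_j)} ⋯ ξ_{λ_l(μ_1…μ_j)}` (ordered matrix product). -/
noncomputable def xiPart {n N : ℕ} (g : (Fin n → ℝ) → Matrix (Fin N) (Fin N) ℝ)
    (μ : ℕ → Fin n) (L : List (Finset ℕ)) (x : Fin n → ℝ) : Matrix (Fin N) (Fin N) ℝ :=
  (L.map fun A => xiTup g (tupleOf μ A) x).prod

/-- The matrix commutator `[A,B] = AB − BA`. -/
def mcomm {N : ℕ} (A B : Matrix (Fin N) (Fin N) ℝ) : Matrix (Fin N) (Fin N) ℝ :=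
  A * B - B * A

/-- A partition of `{1,…,j}`: an ordered tuple of pairwise disjoint nonempty
subsets of `{1,…,j}` whose union is `{1,…,j}`. -/
def IsPartitionOf (j : ℕ) (L : List (Finset ℕ)) : Prop :=
  (∀ A ∈ L, A.Nonempty) ∧ L.Pairwise Disjoint ∧ L.foldr (· ∪ ·) ∅ = Finset.Icc 1 j

/-- Membership in `P₁⁺(j)`: a partition of `{1,…,j}` whose first block contains `1`. -/
def IsP1Plus (j : ℕ) (L : List (Finset ℕ)) : Prop :=
  IsPartitionOf j L ∧ 1 ∈ L.headI

/-- Membership in `P^a(j)`: a partition of `{1,…,j}` that is anti-lexicographically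
ordered, i.e. `max λ₁ < max λ₂ < … < max λ_l`. -/
def IsPAnti (j : ℕ) (L : List (Finset ℕ)) : Prop :=
  IsPartitionOf j L ∧ (L.map fun A => A.sup id).Chain' (· < ·)

/-- `λ_{[s]}⁺` (for `1 ≤ s ≤ l`): adjoin `j+1` to the `s`-th block (1-indexed). -/
def plusOp (j : ℕ) (L : List (Finset ℕ)) (s : ℕ) : List (Finset ℕ) :=
  L.set (s - 1) (insert (j + 1) (L.getD (s - 1) ∅))

/-- `λ_{[s]}⁻` (for `1 ≤ s ≤ l`): insert the new singleton block `{j+1}` right after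
the `s`-th block (1-indexed). -/
def minusOp (j : ℕ) (L : List (Finset ℕ)) (s : ℕ) : List (Finset ℕ) :=
  L.take s ++ [{j + 1}] ++ L.drop s

section

variable {n N : ℕ}

theorem MSmooth.differentiableAt {f : (Fin n → ℝ) → Matrix (Fin N) (Fin N) ℝ} (hf : MSmooth f)
    (x : Fin n → ℝ) (a b : Fin N) : DifferentiableAt ℝ (fun y => f y a b) x :=
  ((hf a b).differentiable (by simp)) x

theorem MSmooth.pd {f : (Fin n → ℝ) → Matrix (Fin N) (Fin N) ℝ} (hf : MSmooth f) (μ : Fin n) :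
    MSmooth (pd μ f) := by
  intro a b
  have h1 : ContDiff ℝ (⊤ : ℕ∞) (fderiv ℝ fun y => f y a b) :=
    (hf a b).fderiv_right (by simp)
  exact h1.clm_apply contDiff_const

theorem MSmooth.add {f g : (Fin n → ℝ) → Matrix (Fin N) (Fin N) ℝ} (hf : MSmooth f)
    (hg : MSmooth g) : MSmooth (fun x => f x + g x) :=
  fun a b => (hf a b).add (hg a b)

theorem MSmooth.mul {f g : (Fin n → ℝ) → Matrix (Fin N) (Fin N) ℝ} (hf : MSmooth f)
    (hg : MSmooth g) : MSmooth (fun x => f x * g x) := by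
  intro a b
  simp only [Matrix.mul_apply]
  exact ContDiff.sum fun c _ => (hf a c).mul (hg c b)

theorem MSmooth.det {f : (Fin n → ℝ) → Matrix (Fin N) (Fin N) ℝ} (hf : MSmooth f) :
    ContDiff ℝ (⊤ : ℕ∞) fun x => (f x).det := by
  simp only [Matrix.det_apply']
  exact ContDiff.sum fun σ _ => contDiff_const.mul (contDiff_prod fun i _ => hf (σ i) i)

theorem MSmooth.inv {f : (Fin n → ℝ) → Matrix (Fin N) (Fin N) ℝ} (hf : MSmooth f)
    (hu : ∀ x, IsUnit (f x)) : MSmooth (fun x => (f x)⁻¹) := by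
  intro a b
  simp only [Matrix.inv_def, Matrix.smul_apply, Ring.inverse_eq_inv', Matrix.adjugate_apply,
    smul_eq_mul]
  refine (hf.det.inv fun x => ((Matrix.isUnit_iff_isUnit_det _).1 (hu x)).ne_zero).mul
    (MSmooth.det ?_)
  intro c d
  by_cases hc : c = b
  · subst hc
    simpa using contDiff_const
  · simpa [Matrix.updateRow_ne hc] using hf c d

theorem pd_add {f g : (Fin n → ℝ) → Matrix (Fin N) (Fin N) ℝ} (hf : MSmooth f)
    (hg : MSmooth g) (μ : Fin n) :
    pd μ (fun x => f x + g x) = fun x => pd μ f x + pd μ g x := by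
  funext x
  ext a b
  simp only [pd, Matrix.of_apply, Matrix.add_apply]
  rw [fderiv_fun_add (hf.differentiableAt x a b) (hg.differentiableAt x a b)]
  rfl

theorem pd_mul {f g : (Fin n → ℝ) → Matrix (Fin N) (Fin N) ℝ} (hf : MSmooth f)
    (hg : MSmooth g) (μ : Fin n) :
    pd μ (fun x => f x * g x) = fun x => pd μ f x * g x + f x * pd μ g x := by
  funext x
  ext a b
  simp only [pd, Matrix.of_apply, Matrix.add_apply, Matrix.mul_apply]
  have hd : ∀ c ∈ Finset.univ, DifferentiableAt ℝ (fun y => f y a c * g y c b) x :=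
    fun c _ => (hf.differentiableAt x a c).mul (hg.differentiableAt x c b)
  rw [fderiv_fun_sum hd,
    sum_apply, ← Finset.sum_add_distrib]
  refine Finset.sum_congr rfl fun c _ => ?_
  rw [fderiv_fun_mul (hf.differentiableAt x a c) (hg.differentiableAt x c b)]
  simp only [add_apply, smul_apply, smul_eq_mul]
  ring

theorem MSmooth.iterPD {f : (Fin n → ℝ) → Matrix (Fin N) (Fin N) ℝ} (hf : MSmooth f)
    (l : List (Fin n)) : MSmooth (iterPD l f) := by
  induction l with
  | nil => exact hf
  | cons μ l ih => exact ih.pd μ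

theorem iterPD_add {f g : (Fin n → ℝ) → Matrix (Fin N) (Fin N) ℝ} (hf : MSmooth f)
    (hg : MSmooth g) (l : List (Fin n)) :
    iterPD l (fun x => f x + g x) = fun x => iterPD l f x + iterPD l g x := by
  induction l with
  | nil => rfl
  | cons μ l ih =>
    simp only [iterPD]
    rw [ih, pd_add (hf.iterPD l) (hg.iterPD l)]

theorem iterPD_append_singleton (l : List (Fin n)) (ν : Fin n)
    (f : (Fin n → ℝ) → Matrix (Fin N) (Fin N) ℝ) :
    iterPD (l ++ [ν]) f = iterPD l (pd ν f) := by
  induction l with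
  | nil => rfl
  | cons μ l ih => simp only [List.cons_append, iterPD, ih]

theorem xiJ_append_singleton (g : (Fin n → ℝ) → Matrix (Fin N) (Fin N) ℝ) (l : List (Fin n))
    (ν : Fin n) : xiJ g (l ++ [ν]) = iterPD l (fun x => pd ν g x * (g x)⁻¹) := by
  induction l with
  | nil => rfl
  | cons μ l ih =>
    have h1 : xiJ g (μ :: l ++ [ν]) = pd μ (xiJ g (l ++ [ν])) := by
      cases l <;> rfl
    rw [h1, ih, iterPD]

/-- `f` and `g` have the same `m`-jet at `x₀`: all iterated partial derivatives of order at most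
`m`, including the values (order `0`), agree at `x₀`. -/
def JetEq (m : ℕ) (x₀ : Fin n → ℝ) (f g : (Fin n → ℝ) → Matrix (Fin N) (Fin N) ℝ) : Prop :=
  ∀ l : List (Fin n), l.length ≤ m → iterPD l f x₀ = iterPD l g x₀

theorem JetEq.mono {m m' : ℕ} {x₀ : Fin n → ℝ} {f g : (Fin n → ℝ) → Matrix (Fin N) (Fin N) ℝ}
    (h : JetEq m x₀ f g) (hm : m' ≤ m) : JetEq m' x₀ f g :=
  fun l hl => h l (hl.trans hm)

theorem JetEq.pd {m : ℕ} {x₀ : Fin n → ℝ} {f g : (Fin n → ℝ) → Matrix (Fin N) (Fin N) ℝ}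
    (h : JetEq (m + 1) x₀ f g) (ν : Fin n) : JetEq m x₀ (pd ν f) (pd ν g) := by
  intro l hl
  rw [← iterPD_append_singleton, ← iterPD_append_singleton]
  exact h _ (by simpa using hl)

theorem jetEq_succ {m : ℕ} {x₀ : Fin n → ℝ} {f g : (Fin n → ℝ) → Matrix (Fin N) (Fin N) ℝ}
    (h₀ : f x₀ = g x₀) (h : ∀ ν, JetEq m x₀ (pd ν f) (pd ν g)) : JetEq (m + 1) x₀ f g := by
  intro l hl
  rcases List.eq_nil_or_concat' l with rfl | ⟨l, ν, rfl⟩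
  · exact h₀
  · rw [iterPD_append_singleton, iterPD_append_singleton]
    exact h ν l (by simpa using hl)

/-- The `m`-jet of a product depends only on the `m`-jets of the factors: the Leibniz rule
`∂_ν (A B) = (∂_ν A) B + A (∂_ν B)` reduces order `m + 1` to order `m` for the two summands. -/
theorem JetEq.mul {m : ℕ} {x₀ : Fin n → ℝ} {A A' B B' : (Fin n → ℝ) → Matrix (Fin N) (Fin N) ℝ}
    (sA : MSmooth A) (sA' : MSmooth A') (sB : MSmooth B) (sB' : MSmooth B')
    (hA : JetEq m x₀ A A') (hB : JetEq m x₀ B B') :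
    JetEq m x₀ (fun x => A x * B x) (fun x => A' x * B' x) := by
  have h0 : A x₀ * B x₀ = A' x₀ * B' x₀ :=
    congrArg₂ (· * ·) (hA [] (by simp)) (hB [] (by simp))
  induction m generalizing A A' B B' with
  | zero =>
    intro l hl
    obtain rfl : l = [] := by simpa using hl
    exact h0
  | succ m ih =>
    refine jetEq_succ h0 fun ν l hl => ?_
    have val {F F' : (Fin n → ℝ) → Matrix (Fin N) (Fin N) ℝ} (h : JetEq m x₀ F F') :
        F x₀ = F' x₀ := h [] (by simp)
    have hA' := hA.mono m.le_succ
    have hB' := hB.mono m.le_succ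
    rw [pd_mul sA sB, pd_mul sA' sB',
      iterPD_add ((sA.pd ν).mul sB) (sA.mul (sB.pd ν)),
      iterPD_add ((sA'.pd ν).mul sB') (sA'.mul (sB'.pd ν))]
    exact congrArg₂ (· + ·)
      (ih (sA.pd ν) (sA'.pd ν) sB sB' (hA.pd ν) hB'
        (congrArg₂ (· * ·) (val (hA.pd ν)) (val hB')) l hl)
      (ih sA sA' (sB.pd ν) (sB'.pd ν) hA' (hB.pd ν)
        (congrArg₂ (· * ·) (val hA') (val (hB.pd ν))) l hl)

theorem pd_eq_xi_mul {g : (Fin n → ℝ) → Matrix (Fin N) (Fin N) ℝ} (hu : ∀ x, IsUnit (g x))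
    (ν : Fin n) : pd ν g = fun x => (pd ν g x * (g x)⁻¹) * g x := by
  funext x
  rw [Matrix.nonsing_inv_mul_cancel_right _ _ ((Matrix.isUnit_iff_isUnit_det _).1 (hu x))]

end

/-- injectivity of the trivialization, coordinate form: if two smooth,
pointwise invertible maps `g, h : ℝⁿ → M_N(ℝ)` satisfy `g(x₀) = h(x₀)` and have the same
trivialized components `ξ^{(j)}` at `x₀` for all `1 ≤ j ≤ k` and all tuples, then all
their iterated partial derivatives of order `1 ≤ r ≤ k` agree at `x₀`, i.e. they have the
same `k`-jet at `x₀`. -/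
theorem jet_injective (n N k : ℕ) (hn : 1 ≤ n) (hN : 1 ≤ N) (hk : 1 ≤ k)
    (g h : (Fin n → ℝ) → Matrix (Fin N) (Fin N) ℝ)
    (hg : MSmooth g) (hh : MSmooth h)
    (hginv : ∀ x, IsUnit (g x)) (hhinv : ∀ x, IsUnit (h x))
    (x₀ : Fin n → ℝ) (h₀ : g x₀ = h x₀)
    (hxi : ∀ μs : List (Fin n), 1 ≤ μs.length → μs.length ≤ k →
      xiJ g μs x₀ = xiJ h μs x₀) :
    ∀ μs : List (Fin n), 1 ≤ μs.length → μs.length ≤ k →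
      iterPD μs g x₀ = iterPD μs h x₀ := by
  have key : ∀ r, r ≤ k → JetEq r x₀ g h := by
    intro r
    induction r with
    | zero =>
      intro _ l hl
      obtain rfl : l = [] := by simpa using hl
      exact h₀
    | succ r ih =>
      intro hr
      refine jetEq_succ h₀ fun ν => ?_
      have hξ : JetEq r x₀ (fun x => pd ν g x * (g x)⁻¹) (fun x => pd ν h x * (h x)⁻¹) := by
        intro l hl
        rw [← xiJ_append_singleton, ← xiJ_append_singleton]
        exact hxi _ (by simp) (by simp only [List.length_append, List.length_singleton]; omega)
      rw [pd_eq_xi_mul hginv, pd_eq_xi_mul hhinv]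
      exact JetEq.mul ((hg.pd ν).mul (hg.inv hginv)) ((hh.pd ν).mul (hh.inv hhinv)) hg hh hξ
        (ih (by omega))
  exact fun μs _ hμ => key k le_rfl μs hμ
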